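/- Assume X is nonempty and for every arc e there exist cycle covers x, x' ∈ X with x_e = 1 and x'_e = 0. For each arc e let q_e^max := sup { Σ_{f∈A} Q_{ef} x_f : x ∈ P, x_e = 0 }, and define the MILP based bound v_MILP as the infimum of Σ_{e∈A} y_e over all pairs (x, y) with x ∈ P and y ∈ ℝ^A satisfying y_e ≥ z_e x_e for all e and y_e ≥ Σ_{f∈A} Q_{ef} x_f − q_e^max (1 − x_e) for all e. Then v_GL ≤ v_MILP, i.e. the MILP based bound dominates the Gilmore–Lawler bound. -/

import Mathlib

/-!
Every pair `(x, y)` feasible for the MILP based bound satisfies `y e ≥ z e * x e`, so its value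
`∑ e, y e` is at least the Gilmore–Lawler objective at `x`, which is at least `v_GL`. The remaining
content is that both infima are genuine: a feasible pair is built from a cycle cover, and the
Gilmore–Lawler objective is bounded below because the polytope lies in the unit cube
(`InPoly.le_one`).
-/

open Finset

/-- A cycle cover of the directed graph with arc set `A`, node set `N`,
starting-node map `src` and ending-node map `tgt`: a 0/1 vector such that
exactly one arc leaves and exactly one arc enters every node. -/
def IsCycleCover {N A : Type*} [Fintype A] [DecidableEq N]
    (src tgt : A → N) (x : A → ℝ) : Prop :=
  (∀ e, x e = 0 ∨ x e = 1) ∧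
  (∀ i : N, ∑ e ∈ univ.filter (fun e => src e = i), x e = 1) ∧
  (∀ i : N, ∑ e ∈ univ.filter (fun e => tgt e = i), x e = 1)

/-- The quadratic form `xᵀ Q x`. -/
def quadForm {A : Type*} [Fintype A] (Q : A → A → ℝ) (x : A → ℝ) : ℝ :=
  ∑ e, ∑ f, Q e f * x e * x f

/-- Membership in the fractional cycle cover polytope `P`. -/
def InPoly {N A : Type*} [Fintype A] [DecidableEq N]
    (src tgt : A → N) (x : A → ℝ) : Prop :=
  (∀ e, 0 ≤ x e) ∧
  (∀ i : N, ∑ e ∈ univ.filter (fun e => src e = i), x e = 1) ∧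
  (∀ i : N, ∑ e ∈ univ.filter (fun e => tgt e = i), x e = 1)

/-- `z_e`: the minimum interaction cost of arc `e` with a fractional cycle
cover containing `e`. -/
noncomputable def glz {N A : Type*} [Fintype A] [DecidableEq N]
    (src tgt : A → N) (Q : A → A → ℝ) (e : A) : ℝ :=
  sInf {w : ℝ | ∃ x, InPoly src tgt x ∧ x e = 1 ∧ w = ∑ f, Q e f * x f}

/-- The Gilmore–Lawler bound `v_GL`. -/
noncomputable def vGL {N A : Type*} [Fintype A] [DecidableEq N]
    (src tgt : A → N) (Q : A → A → ℝ) : ℝ :=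
  sInf {v : ℝ | ∃ x, InPoly src tgt x ∧ v = ∑ e, glz src tgt Q e * x e}

/-- Every coordinate of a point of the polytope is at most `1`, so the polytope is bounded. -/
theorem InPoly.le_one {N A : Type*} [Fintype A] [DecidableEq N]
    {src tgt : A → N} {x : A → ℝ} (hx : InPoly src tgt x) (e : A) : x e ≤ 1 := by
  rw [← hx.2.1 (src e)]
  exact single_le_sum (f := x) (fun i _ => hx.1 i) (by simp)

theorem stmt_17 {N A : Type*} [Fintype N] [Fintype A] [DecidableEq N]
    (src tgt : A → N) (Q : A → A → ℝ)
    (hX : ∃ x, IsCycleCover src tgt x)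
    (hcov1 : ∀ e, ∃ x, IsCycleCover src tgt x ∧ x e = 1)
    (hcov0 : ∀ e, ∃ x, IsCycleCover src tgt x ∧ x e = 0) :
    vGL src tgt Q ≤
      sInf {v : ℝ | ∃ (x : A → ℝ) (y : A → ℝ), InPoly src tgt x ∧
        (∀ e, glz src tgt Q e * x e ≤ y e) ∧
        (∀ e, (∑ f, Q e f * x f) -
            (sSup {w : ℝ | ∃ z, InPoly src tgt z ∧ z e = 0 ∧
              w = ∑ f, Q e f * z f}) * (1 - x e) ≤ y e) ∧
        v = ∑ e, y e} := by
  obtain ⟨x₀, hx₀, h_src, h_tgt⟩ := hX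
  have hP : InPoly src tgt x₀ :=
    ⟨fun e => by rcases hx₀ e with h | h <;> simp [h], h_src, h_tgt⟩
  -- Since `sInf` of an empty or unbounded set of reals is `0`, both the feasibility of the
  -- right-hand problem and the boundedness of the left-hand one have to be checked.
  refine le_csInf ⟨_, x₀, fun e => max (glz src tgt Q e * x₀ e) _, hP,
    fun e => le_max_left _ _, fun e => le_max_right _ _, rfl⟩ ?_
  rintro v ⟨x, y, hx, hy, -, rfl⟩
  have hbdd : BddBelow {v : ℝ | ∃ x, InPoly src tgt x ∧ v = ∑ e, glz src tgt Q e * x e} := by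
    refine ⟨∑ e, -|glz src tgt Q e|, ?_⟩
    rintro _ ⟨z, hz, rfl⟩
    refine sum_le_sum fun e _ => ?_
    have h := mul_le_of_le_one_right (abs_nonneg (glz src tgt Q e)) (hz.le_one e)
    have h' := mul_le_mul_of_nonneg_right (neg_abs_le (glz src tgt Q e)) (hz.1 e)
    linarith
  exact (csInf_le hbdd ⟨x, hx, rfl⟩).trans (sum_le_sum fun e _ => hy e)
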